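/- arXiv:2308.15954 — 2 statements merged into one kernel-verified Lean document; each statement's English description precedes it below -/
import Mathlib

section
/- Let p₊, p₋ be coprime integers with p₋ > p₊ ≥ 2. For integers r, r', s, s' with 1 ≤ r, r' ≤ p₊−1 and 1 ≤ s, s' ≤ p₋−1, one has h_{r,s} = h_{r',s'} if and only if (r', s') = (r, s) or (r', s') = (p₊−r, p₋−s). Consequently the set {h_{r,s} : 1 ≤ r ≤ p₊−1, 1 ≤ s ≤ p₋−1} has exactly (p₊−1)(p₋−1)/2 elements. -/
/-!
Completing the square gives `h_{r,s} = ((q r - p s)² - (q - p)²) / (4 p q)`, so `h_{r,s} = h_{r',s'}`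
means `q r - p s = ± (q r' - p s')`. As `p` and `q` are coprime, the plus sign gives `p ∣ r - r'`
and the minus sign gives `p ∣ r + r'`; inside the Kac table these force `r' = r` and `r' = p - r`
respectively, and then `s' = s` and `s' = q - s`. The symmetry `(r, s) ↦ (p - r, q - s)` of the
table has no fixed point, since such a point would make both `p` and `q` even. So every fibre
of `(r, s) ↦ h_{r,s}` has exactly two elements, and the number of values is half the size
of the table.
-/


noncomputable section

/-- `α₊ = √(2 p₋ / p₊)`, where `p = p₊` and `q = p₋`. -/
def alphaP (p q : ℕ) : ℝ := Real.sqrt (2 * (q : ℝ) / (p : ℝ))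

/-- `α₋ = -√(2 p₊ / p₋)`, where `p = p₊` and `q = p₋`. -/
def alphaM (p q : ℕ) : ℝ := -Real.sqrt (2 * (p : ℝ) / (q : ℝ))

/-- `α₀ = α₊ + α₋`. -/
def alphaZ (p q : ℕ) : ℝ := alphaP p q + alphaM p q

/-- The conformal weight `h_α = (1/2) · α · (α - α₀)`. -/
def hwt (p q : ℕ) (a : ℝ) : ℝ := (1 / 2) * a * (a - alphaZ p q)

/-- `α_{r,s;n} = ((1-r)/2)·α₊ + ((1-s)/2)·α₋ + (n/2)·√(2 p₊ p₋)`. -/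
def alphaRS (p q : ℕ) (r s n : ℤ) : ℝ :=
  ((1 - (r : ℝ)) / 2) * alphaP p q + ((1 - (s : ℝ)) / 2) * alphaM p q
    + ((n : ℝ) / 2) * Real.sqrt (2 * (p : ℝ) * (q : ℝ))

/-- `h_{r,s;n} = h_{α_{r,s;n}}`. -/
def hRS (p q : ℕ) (r s n : ℤ) : ℝ := hwt p q (alphaRS p q r s n)

/-- The weight `h_{r,s}` without square roots. -/
theorem hRS_zero_eq (p q : ℕ) (hp : 0 < p) (hq : 0 < q) (r s : ℤ) :
    hRS p q r s 0 =
      (((q : ℝ) * r - p * s) ^ 2 - ((q : ℝ) - p) ^ 2) / (4 * p * q) := by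
  have hp' : (0 : ℝ) < p := by exact_mod_cast hp
  have hq' : (0 : ℝ) < q := by exact_mod_cast hq
  have h1 : alphaP p q ^ 2 = 2 * q / p := Real.sq_sqrt (by positivity)
  have h2 : alphaM p q ^ 2 = 2 * p / q := by
    rw [alphaM, neg_sq]
    exact Real.sq_sqrt (by positivity)
  have h3 : alphaP p q * alphaM p q = -2 := by
    rw [alphaP, alphaM, mul_neg, ← Real.sqrt_mul (by positivity),
      show (2 * (q : ℝ) / p) * (2 * p / q) = 2 ^ 2 by field_simp,
      Real.sqrt_sq (by norm_num)]
  have key : hRS p q r s 0 = (((r : ℝ) ^ 2 - 1) * alphaP p q ^ 2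
      + ((s : ℝ) ^ 2 - 1) * alphaM p q ^ 2
      + 2 * ((r : ℝ) * s - 1) * (alphaP p q * alphaM p q)) / 8 := by
    simp only [hRS, hwt, alphaRS, alphaZ, Int.cast_zero]
    ring
  rw [key, h1, h2, h3]
  field_simp
  ring

theorem hRS_zero_eq_iff_sq (p q : ℕ) (hp : 0 < p) (hq : 0 < q) (r s r' s' : ℤ) :
    hRS p q r s 0 = hRS p q r' s' 0 ↔
      ((q : ℤ) * r - p * s) ^ 2 = ((q : ℤ) * r' - p * s') ^ 2 := by
  have hp' : (0 : ℝ) < p := by exact_mod_cast hp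
  have hq' : (0 : ℝ) < q := by exact_mod_cast hq
  rw [hRS_zero_eq p q hp hq, hRS_zero_eq p q hp hq, div_left_inj' (by positivity),
    sub_left_inj]
  exact_mod_cast Iff.rfl

theorem hRS_zero_eq_iff (p q : ℕ) (hco : Nat.Coprime p q) (hp : 0 < p) (hq : 0 < q)
    (r r' s s' : ℤ) (h1 : 1 ≤ r) (h2 : r ≤ (p : ℤ) - 1) (h3 : 1 ≤ r') (h4 : r' ≤ (p : ℤ) - 1) :
    hRS p q r s 0 = hRS p q r' s' 0 ↔
        (r' = r ∧ s' = s) ∨ (r' = (p : ℤ) - r ∧ s' = (q : ℤ) - s) := by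
  have hp' : (p : ℤ) ≠ 0 := by omega
  have hc : IsCoprime (p : ℤ) q := Nat.isCoprime_iff_coprime.2 hco
  rw [hRS_zero_eq_iff_sq p q hp hq]
  constructor
  · intro h
    rcases sq_eq_sq_iff_eq_or_eq_neg.1 h with h | h
    · left
      have hd : (p : ℤ) ∣ r' - r :=
        hc.dvd_of_dvd_mul_left ⟨s' - s, by linear_combination -h⟩
      have hr : r' - r = 0 :=
        Int.eq_zero_of_abs_lt_dvd hd (by rw [abs_lt]; constructor <;> omega)
      have hr' : r' = r := by omega
      subst hr'
      exact ⟨rfl, mul_left_cancel₀ hp' (by linear_combination h)⟩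
    · right
      have hd : (p : ℤ) ∣ r' + r :=
        hc.dvd_of_dvd_mul_left ⟨s' + s, by linear_combination h⟩
      -- `0 < r' + r < 2 p`, so the only multiple of `p` available is `p` itself.
      have hr : r' + r - p = 0 :=
        Int.eq_zero_of_abs_lt_dvd (dvd_sub_self_right.2 hd)
          (by rw [abs_lt]; constructor <;> omega)
      have hr' : r' = p - r := by omega
      subst hr'
      exact ⟨rfl, mul_left_cancel₀ hp' (by linear_combination -h)⟩
  · rintro (⟨rfl, rfl⟩ | ⟨rfl, rfl⟩)
    · rfl
    · ring

/-- For coprime `p₋ > p₊ ≥ 2` and `1 ≤ r, r' ≤ p₊-1`, `1 ≤ s, s' ≤ p₋-1`: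
`h_{r,s} = h_{r',s'}` iff `(r',s') = (r,s)` or `(r',s') = (p₊-r,p₋-s)`; consequently
`{h_{r,s} : 1 ≤ r ≤ p₊-1, 1 ≤ s ≤ p₋-1}` has exactly `(p₊-1)(p₋-1)/2` elements.
(Here `p = p₊`, `q = p₋`.) -/
theorem hRS_interior_Kac_table (p q : ℕ) (hco : Nat.Coprime p q) (hp : 2 ≤ p) (hpq : p < q) :
    (∀ r r' s s' : ℤ, 1 ≤ r → r ≤ (p : ℤ) - 1 → 1 ≤ r' → r' ≤ (p : ℤ) - 1 →
      1 ≤ s → s ≤ (q : ℤ) - 1 → 1 ≤ s' → s' ≤ (q : ℤ) - 1 →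
      (hRS p q r s 0 = hRS p q r' s' 0 ↔
        (r' = r ∧ s' = s) ∨ (r' = (p : ℤ) - r ∧ s' = (q : ℤ) - s))) ∧
    Set.ncard {x : ℝ | ∃ r s : ℤ, 1 ≤ r ∧ r ≤ (p : ℤ) - 1 ∧ 1 ≤ s ∧ s ≤ (q : ℤ) - 1 ∧
        x = hRS p q r s 0} = (p - 1) * (q - 1) / 2 := by
  have hp0 : 0 < p := by omega
  have hq0 : 0 < q := by omega
  refine ⟨fun r r' s s' h1 h2 h3 h4 _ _ _ _ =>
    hRS_zero_eq_iff p q hco hp0 hq0 r r' s s' h1 h2 h3 h4, ?_⟩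
  classical
  let T : Finset (ℤ × ℤ) := Finset.Icc 1 ((p : ℤ) - 1) ×ˢ Finset.Icc 1 ((q : ℤ) - 1)
  let f : ℤ × ℤ → ℝ := fun x => hRS p q x.1 x.2 0
  have hmem : ∀ x : ℤ × ℤ, x ∈ T ↔
      (1 ≤ x.1 ∧ x.1 ≤ (p : ℤ) - 1) ∧ (1 ≤ x.2 ∧ x.2 ≤ (q : ℤ) - 1) := by
    intro x
    simp [T, Finset.mem_product]
  have hset : {x : ℝ | ∃ r s : ℤ, 1 ≤ r ∧ r ≤ (p : ℤ) - 1 ∧ 1 ≤ s ∧ s ≤ (q : ℤ) - 1 ∧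
      x = hRS p q r s 0} = ((T.image f : Finset ℝ) : Set ℝ) := by
    ext x
    simp only [Set.mem_ofPred_eq, Finset.mem_coe, Finset.mem_image, hmem, Prod.exists, f]
    constructor
    · rintro ⟨r, s, h1, h2, h3, h4, rfl⟩
      exact ⟨r, s, ⟨⟨h1, h2⟩, h3, h4⟩, rfl⟩
    · rintro ⟨r, s, ⟨⟨h1, h2⟩, h3, h4⟩, rfl⟩
      exact ⟨r, s, h1, h2, h3, h4, rfl⟩
  have hfib : ∀ b ∈ T.image f, (T.filter fun x => f x = b).card = 2 := by
    intro b hb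
    obtain ⟨⟨r, s⟩, hx, rfl⟩ := Finset.mem_image.1 hb
    have hx' := (hmem _).1 hx
    simp only at hx'
    have heq : (T.filter fun x => f x = f (r, s)) = {(r, s), ((p : ℤ) - r, (q : ℤ) - s)} := by
      ext ⟨r', s'⟩
      simp only [Finset.mem_filter, hmem, Finset.mem_insert, Finset.mem_singleton,
        Prod.mk.injEq, f]
      constructor
      · rintro ⟨h, h'⟩
        exact (hRS_zero_eq_iff p q hco hp0 hq0 r r' s s' hx'.1.1 hx'.1.2 h.1.1 h.1.2).1 h'.symm
      · intro h
        have hb : (1 ≤ r' ∧ r' ≤ (p : ℤ) - 1) ∧ (1 ≤ s' ∧ s' ≤ (q : ℤ) - 1) := by omega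
        exact ⟨hb, ((hRS_zero_eq_iff p q hco hp0 hq0 r r' s s'
          hx'.1.1 hx'.1.2 hb.1.1 hb.1.2).2 h).symm⟩
    rw [heq, Finset.card_pair]
    intro h
    rw [Prod.mk.injEq] at h
    have hp2 : 2 ∣ p := by omega
    have hq2 : 2 ∣ q := by omega
    exact absurd (Nat.dvd_gcd hp2 hq2) (by rw [hco.gcd_eq_one]; norm_num)
  have hcard : T.card = (p - 1) * (q - 1) := by
    rw [Finset.card_product, Int.card_Icc, Int.card_Icc]
    congr 1 <;> omega
  have hsum := Finset.card_eq_sum_card_image f T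
  rw [Finset.sum_const_nat hfib, hcard] at hsum
  rw [hset, Set.ncard_coe_finset, hsum, Nat.mul_div_cancel _ (by norm_num)]
end
end

section
/- Let p₊, p₋ be coprime integers with p₋ > p₊ ≥ 2. For all integers i, j ≥ 1, one has h_{i,1} = h_{1,j} if and only if i = j = 1 or (i+1)·p₋ = (j+1)·p₊. -/
/-!
Since `α₊² = 2p₋/p₊`, `α₋² = 2p₊/p₋` and `α₊α₋ = -2`, the weights satisfy the Kac formula
`4 p₊ p₋ h_{r,s} = (r p₋ - s p₊)² - (p₋ - p₊)²` (`kac_formula`). Hence `h_{i,1} = h_{1,j}` iff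
`i p₋ - p₊ = ±(p₋ - j p₊)`. The plus sign reads `(i - 1) p₋ + (j - 1) p₊ = 0`, which for
`i, j ≥ 1` forces `i = j = 1`; the minus sign reads `(i + 1) p₋ = (j + 1) p₊`.
-/

noncomputable section

theorem alphaP_sq (p q : ℕ) : alphaP p q ^ 2 = 2 * (q : ℝ) / p :=
  Real.sq_sqrt (by positivity)

theorem alphaM_sq (p q : ℕ) : alphaM p q ^ 2 = 2 * (p : ℝ) / q := by
  rw [alphaM, neg_sq]
  exact Real.sq_sqrt (by positivity)

theorem alphaP_mul_alphaM (p q : ℕ) (hp : 0 < p) (hq : 0 < q) :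
    alphaP p q * alphaM p q = -2 := by
  have hp' : (0 : ℝ) < p := by exact_mod_cast hp
  have hq' : (0 : ℝ) < q := by exact_mod_cast hq
  have h : 2 * (q : ℝ) / p * (2 * (p : ℝ) / q) = 2 ^ 2 := by
    field_simp
  rw [alphaP, alphaM, mul_neg, ← Real.sqrt_mul (by positivity), h,
    Real.sqrt_sq (by norm_num)]

/-- The Kac formula `h_{r,s} = ((r p₋ - s p₊)² - (p₋ - p₊)²) / (4 p₊ p₋)`, denominators cleared. -/
theorem kac_formula (p q : ℕ) (hp : 0 < p) (hq : 0 < q) (r s : ℤ) :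
    4 * (p : ℝ) * q * hRS p q r s 0 = ((r : ℝ) * q - s * p) ^ 2 - ((q : ℝ) - p) ^ 2 := by
  have hp' : (p : ℝ) ≠ 0 := by exact_mod_cast hp.ne'
  have hq' : (q : ℝ) ≠ 0 := by exact_mod_cast hq.ne'
  have h : hRS p q r s 0 = 1 / 8 * (((r : ℝ) ^ 2 - 1) * alphaP p q ^ 2
      + ((s : ℝ) ^ 2 - 1) * alphaM p q ^ 2
      + (2 * r * s - 2) * (alphaP p q * alphaM p q)) := by
    simp only [hRS, hwt, alphaRS, alphaZ, Int.cast_zero]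
    ring
  rw [h, alphaP_sq, alphaM_sq, alphaP_mul_alphaM p q hp hq]
  field_simp
  ring

/-- For coprime `p₋ > p₊ ≥ 2` and integers `i, j ≥ 1`:
`h_{i,1} = h_{1,j}` iff `i = j = 1` or `(i+1)·p₋ = (j+1)·p₊`.
(Here `p = p₊`, `q = p₋`.) -/
theorem hRS_first_row_column (p q : ℕ) (hco : Nat.Coprime p q) (hp : 2 ≤ p) (hpq : p < q)
    (i j : ℤ) (hi : 1 ≤ i) (hj : 1 ≤ j) :
    hRS p q i 1 0 = hRS p q 1 j 0 ↔ (i = 1 ∧ j = 1) ∨ (i + 1) * (q : ℤ) = (j + 1) * (p : ℤ) := by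
  have hp0 : 0 < p := by omega
  have hq0 : 0 < q := by omega
  have hpR : (0 : ℝ) < p := by exact_mod_cast hp0
  have hqR : (0 : ℝ) < q := by exact_mod_cast hq0
  have key : hRS p q i 1 0 = hRS p q 1 j 0 ↔
      (i * (q : ℤ) - p) ^ 2 = ((q : ℤ) - j * p) ^ 2 := by
    have h4 : 4 * (p : ℝ) * q ≠ 0 := by positivity
    rw [← mul_right_inj' h4, kac_formula p q hp0 hq0, kac_formula p q hp0 hq0, sub_left_inj,
      ← Int.cast_inj (α := ℝ)]
    push_cast
    simp only [one_mul]
  rw [key, sq_eq_sq_iff_eq_or_eq_neg]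
  have hpZ : (0 : ℤ) < p := by exact_mod_cast hp0
  have hqZ : (0 : ℤ) < q := by exact_mod_cast hq0
  refine or_congr ⟨fun h => ?_, ?_⟩ ⟨fun h => by linarith, fun h => by linarith⟩
  · -- Two nonnegative quantities sum to zero: `(i - 1) q + (j - 1) p = 0`.
    have h1 : 0 ≤ (i - 1) * (q : ℤ) := mul_nonneg (by linarith) hqZ.le
    have h2 : 0 ≤ (j - 1) * (p : ℤ) := mul_nonneg (by linarith) hpZ.le
    have h3 : (i - 1) * (q : ℤ) = 0 := by linarith
    have h4 : (j - 1) * (p : ℤ) = 0 := by linarith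
    have h5 := (mul_eq_zero.mp h3).resolve_right hqZ.ne'
    have h6 := (mul_eq_zero.mp h4).resolve_right hpZ.ne'
    exact ⟨by linarith, by linarith⟩
  · rintro ⟨rfl, rfl⟩
    ring
end
end
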